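/- arXiv:1408.2245 — 2 statements merged into one kernel-verified Lean document; each statement's English description precedes it below -/
import Mathlib

section
/- For all x > 0, the double inequality (x + 1/2)·(x² + x + 23/21)/(x⁴ + 2x³ + (17/7)x² + (10/7)x + 12/35) < ψ'(x+1) < (x + 1/2)·(x² + x + π²/(15(π²−9)))/(x⁴ + 2x³ + ((7π²−60)/(5(π²−9)))x² + ((2π²−15)/(5(π²−9)))x + 1/(5(π²−9))) holds. -/
open Real Filter Set

/-- The digamma function ψ(x) = Γ'(x)/Γ(x), as the derivative of log ∘ Γ. -/
noncomputable def digamma (x : ℝ) : ℝ := deriv (fun y : ℝ => Real.log (Real.Gamma y)) x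

/-- L(x,a) = (1/(90a²+2))·ln(x²+x+(3a+1)/3) + (45a²/(90a²+2))·ln(x²+x+(15a−1)/(45a)). -/
noncomputable def L (x a : ℝ) : ℝ :=
  (1 / (90 * a ^ 2 + 2)) * Real.log (x ^ 2 + x + (3 * a + 1) / 3) +
    (45 * a ^ 2 / (90 * a ^ 2 + 2)) * Real.log (x ^ 2 + x + (15 * a - 1) / (45 * a))

open Topology

/-!
Let `R c` be the rational approximations `trigammaApprox c` of `ψ'(x + 1)`, and let `E` be the error
`R c x - ψ'(x + 1)`. Then `E x - E (x + 1) = N x / P x`, where `P` is a positive polynomial and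
`N x = (4 / 25 - 7 / 15 * c) * (x + 1) ^ 2 - c ^ 2`, and `E (x + n) → 0`.

For `c = 12 / 35` the numerator `N` is a negative constant, so `E` increases to `0` along `x + ℕ`:
this is the lower bound. For the upper bound, `c` is chosen such that `E 0 = 0`, knowing that
`ψ'(1) = π ^ 2 / 6`. Now `N` is increasing, negative at `0` and positive from `1` on, so `E` is not
monotone along `x + ℕ` for small `x`. But `P 0 * P (x + y) ≤ P x * P y`, and hence the sequence
`E (x + n) - P 0 / P x * E n` strictly decreases to `0`, so that `E x > P 0 / P x * E 0 = 0`.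
-/

open Topology

lemma lt_of_strictAnti_of_tendsto {α ι : Type*} [TopologicalSpace α] [Preorder α]
    [OrderClosedTopology α] [PartialOrder ι] [IsDirectedOrder ι] [NoMaxOrder ι]
    {u : ι → α} {a : α}
    (hu : StrictAnti u) (ha : Tendsto u atTop (𝓝 a)) (i : ι) : a < u i :=
  have ⟨j, hij⟩ := exists_gt i
  (hu.antitone.le_of_tendsto ha j).trans_lt (hu hij)

lemma lt_of_strictMono_of_tendsto {α ι : Type*} [TopologicalSpace α] [Preorder α]
    [OrderClosedTopology α] [PartialOrder ι] [IsDirectedOrder ι] [NoMaxOrder ι]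
    {u : ι → α} {a : α}
    (hu : StrictMono u) (ha : Tendsto u atTop (𝓝 a)) (i : ι) : u i < a :=
  lt_of_strictAnti_of_tendsto (α := αᵒᵈ) hu.dual_right ha i

lemma differentiableAt_log_Gamma {x : ℝ} (hx : 0 < x) :
    DifferentiableAt ℝ (fun y : ℝ => Real.log (Real.Gamma y)) x := by
  have hpole (m : ℕ) : x ≠ -m := (by linarith [m.cast_nonneg (α := ℝ)] : -(m : ℝ) < x).ne'
  exact (differentiableAt_Gamma hpole).log (Gamma_pos_of_pos hx).ne'

lemma log_Gamma_add_one {x : ℝ} (hx : 0 < x) :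
    Real.log (Real.Gamma (x + 1)) = Real.log (Real.Gamma x) + Real.log x := by
  rw [Gamma_add_one hx.ne', log_mul hx.ne' (Gamma_pos_of_pos hx).ne', add_comm]

lemma digamma_add_one {x : ℝ} (hx : 0 < x) : digamma (x + 1) = digamma x + 1 / x := by
  have h : (fun y : ℝ => Real.log (Real.Gamma (y + 1))) =ᶠ[𝓝 x]
      fun y => Real.log (Real.Gamma y) + Real.log y := by
    filter_upwards [lt_mem_nhds hx] with y hy using log_Gamma_add_one hy
  calc digamma (x + 1) = deriv (fun y : ℝ => Real.log (Real.Gamma (y + 1))) x :=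
        (deriv_comp_add_const (fun y : ℝ => Real.log (Real.Gamma y)) 1 x).symm
    _ = deriv (fun y : ℝ => Real.log (Real.Gamma y) + Real.log y) x := h.deriv_eq
    _ = digamma x + 1 / x := by
        rw [deriv_fun_add (differentiableAt_log_Gamma hx) (differentiableAt_log hx.ne'),
          Real.deriv_log, one_div, digamma]

lemma slope_log_Gamma_add_one {x : ℝ} (hx : 0 < x) :
    slope (Real.log ∘ Real.Gamma) x (x + 1) = Real.log x := by
  simp [slope_def_field, log_Gamma_add_one hx]

lemma digamma_le_log {x : ℝ} (hx : 0 < x) : digamma x ≤ Real.log x := by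
  rw [← slope_log_Gamma_add_one hx]
  exact convexOn_log_Gamma.deriv_le_slope hx (by positivity : 0 < x + 1) (lt_add_one x)
    (differentiableAt_log_Gamma hx)

lemma log_sub_one_div_le_digamma {x : ℝ} (hx : 0 < x) : Real.log x - 1 / x ≤ digamma x := by
  rw [sub_le_iff_le_add, ← digamma_add_one hx, ← slope_log_Gamma_add_one hx]
  have hx' : 0 < x + 1 := by positivity
  exact convexOn_log_Gamma.slope_le_deriv hx hx' (lt_add_one x) (differentiableAt_log_Gamma hx')

lemma tendsto_digamma_sub_log : Tendsto (fun x => digamma x - Real.log x) atTop (𝓝 0) := by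
  have h : Tendsto (fun x : ℝ => -(1 / x)) atTop (𝓝 0) := by
    simpa using (tendsto_inv_atTop_zero (𝕜 := ℝ)).neg
  refine tendsto_of_tendsto_of_tendsto_of_le_of_le' h tendsto_const_nhds ?_ ?_
  all_goals filter_upwards [eventually_gt_atTop 0] with x hx
  · linarith [log_sub_one_div_le_digamma hx]
  · linarith [digamma_le_log hx]

lemma tendsto_const_add_natCast_atTop (x : ℝ) : Tendsto (fun n : ℕ => x + n) atTop atTop :=
  tendsto_atTop_add_const_left _ _ tendsto_natCast_atTop_atTop

lemma tendsto_digamma_add_nat_sub_log (x : ℝ) :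
    Tendsto (fun n : ℕ => digamma (x + n) - Real.log n) atTop (𝓝 0) := by
  have h := (tendsto_digamma_sub_log.comp (tendsto_const_add_natCast_atTop x)).add
    ((tendsto_log_comp_add_sub_log x).comp tendsto_natCast_atTop_atTop)
  simpa [Function.comp_def, add_comm x] using h

lemma hasSum_digamma_sub_digamma {x y : ℝ} (hx : 0 < x) (hy : 0 < y) :
    HasSum (fun n : ℕ => 1 / (x + n) - 1 / (y + n)) (digamma y - digamma x) := by
  wlog hxy : x ≤ y generalizing x y
  · simpa using (this hy hx (le_of_not_ge hxy)).neg
  have hnonneg (n : ℕ) : 0 ≤ 1 / (x + n) - 1 / (y + n) :=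
    sub_nonneg.2 (one_div_le_one_div_of_le (by positivity) (by gcongr))
  rw [hasSum_iff_tendsto_nat_of_nonneg hnonneg]
  have hterm (n : ℕ) : 1 / (x + n) - 1 / (y + n) =
      (digamma (x + (n + 1 : ℕ)) - digamma (y + (n + 1 : ℕ))) -
        (digamma (x + n) - digamma (y + n)) := by
    push_cast
    rw [← add_assoc, ← add_assoc, digamma_add_one (by positivity), digamma_add_one (by positivity)]
    ring
  simp_rw [hterm, Finset.sum_range_sub (fun n : ℕ => digamma (x + n) - digamma (y + n))]
  have h := ((tendsto_digamma_add_nat_sub_log x).sub (tendsto_digamma_add_nat_sub_log y)).sub_const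
    (digamma x - digamma y)
  simpa using h

lemma summable_one_div_add_nat_sq {x : ℝ} (hx : 0 < x) :
    Summable (fun n : ℕ => 1 / (x + n) ^ 2) := by
  refine ((summable_one_div_nat_add_rpow x 2).2 one_lt_two).congr fun n => ?_
  rw [add_comm, abs_of_pos (by positivity), rpow_two]

lemma hasSum_deriv_digamma {x : ℝ} (hx : 0 < x) :
    HasSum (fun n : ℕ => 1 / (x + n) ^ 2) (deriv digamma x) := by
  have hpos {y : ℝ} (hy : x / 2 < y) : 0 < y := by linarith
  have hterm (n : ℕ) (y : ℝ) (hy : x / 2 < y) :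
      HasDerivAt (fun z : ℝ => 1 / (x + n) - 1 / (z + n)) (1 / (y + n) ^ 2) y := by
    have hyn : y + n ≠ 0 := by linarith [hpos hy, n.cast_nonneg (α := ℝ)]
    have hinv := ((hasDerivAt_id y).add_const (n : ℝ)).fun_inv hyn
    simpa [neg_div] using hinv.const_sub (1 / (x + n))
  have hbound (n : ℕ) (y : ℝ) (hy : x / 2 < y) : ‖1 / (y + n) ^ 2‖ ≤ 1 / (x / 2 + n) ^ 2 := by
    have := hpos hy
    rw [norm_of_nonneg (by positivity)]
    gcongr
  have hseries := hasDerivAt_tsum_of_isPreconnected (summable_one_div_add_nat_sq (half_pos hx))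
    isOpen_Ioi isPreconnected_Ioi hterm hbound (half_lt_self hx) (by simp [summable_zero])
    (half_lt_self hx)
  have heq : (fun y => ∑' n : ℕ, (1 / (x + n) - 1 / (y + n))) =ᶠ[𝓝 x]
      fun y => digamma y - digamma x := by
    filter_upwards [lt_mem_nhds hx] with y hy using (hasSum_digamma_sub_digamma hx hy).tsum_eq
  have hderiv := ((hseries.congr_of_eventuallyEq heq.symm).add_const (digamma x)).deriv
  simp only [sub_add_cancel] at hderiv
  exact hderiv ▸ (summable_one_div_add_nat_sq hx).hasSum

lemma deriv_digamma_one : deriv digamma 1 = π ^ 2 / 6 := by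
  have h := (hasSum_nat_add_iff' 1).2 hasSum_zeta_two
  refine (hasSum_deriv_digamma one_pos).unique ?_
  simpa [add_comm] using h

lemma deriv_digamma_add_one {x : ℝ} (hx : 0 < x) :
    deriv digamma (x + 1) = deriv digamma x - 1 / x ^ 2 := by
  have h := (hasSum_nat_add_iff' 1).2 (hasSum_deriv_digamma hx)
  refine (hasSum_deriv_digamma (by positivity)).unique ?_
  simpa [add_assoc, add_comm (1 : ℝ)] using h

lemma tendsto_deriv_digamma_add_nat {x : ℝ} (hx : 0 < x) :
    Tendsto (fun n : ℕ => deriv digamma (x + n)) atTop (𝓝 0) := by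
  have h (n : ℕ) : deriv digamma (x + n) = ∑' k : ℕ, 1 / (x + (k + n : ℕ)) ^ 2 := by
    rw [← (hasSum_deriv_digamma (by positivity : 0 < x + n)).tsum_eq]
    simp [add_assoc, add_comm (n : ℝ)]
  simp_rw [h]
  exact tendsto_sum_nat_add fun k : ℕ => 1 / (x + k) ^ 2

/-- The denominator of `trigammaApprox c`, whose constant term is the parameter `c`. -/
noncomputable def trigammaApproxDen (c x : ℝ) : ℝ :=
  x ^ 4 + 2 * x ^ 3 + (7 / 5 + 3 * c) * x ^ 2 + (2 / 5 + 3 * c) * x + c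

/-- The rational functions approximating `ψ'(x + 1)`. In the variable `t = x + 1 / 2` they are the
continued fractions `t / (w - (1 / 45) / (w + s))` with `w = t ^ 2 + 1 / 12` and
`s = 3 * c - 4 / 15`, which share the first three terms of the asymptotic expansion of
`ψ'(x + 1)` at infinity. -/
noncomputable def trigammaApprox (c x : ℝ) : ℝ :=
  (x + 1 / 2) * (x ^ 2 + x + (1 / 15 + 3 * c)) / trigammaApproxDen c x

/-- The error of `trigammaApprox c` as an approximation of `ψ'(x + 1)`. -/
noncomputable def trigammaError (c x : ℝ) : ℝ := trigammaApprox c x - deriv digamma (x + 1)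

/-- The numerator of `trigammaError c x - trigammaError c (x + 1)` over `errorStepDen c x`; its sign
decides whether the error decreases or increases from `x` to `x + 1`. -/
noncomputable def errorStepNum (c x : ℝ) : ℝ := (4 / 25 - 7 / 15 * c) * (x + 1) ^ 2 - c ^ 2

/-- The common denominator of `trigammaError c x - trigammaError c (x + 1)`, as a product of the
denominators of its three summands. -/
noncomputable def errorStepDen (c x : ℝ) : ℝ :=
  (x + 1) ^ 2 * (trigammaApproxDen c x * trigammaApproxDen c (x + 1))

section Approximation

variable {c : ℝ}

lemma trigammaApproxDen_pos (hc : 3 / 20 < c) (x : ℝ) : 0 < trigammaApproxDen c x := by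
  have hsq : trigammaApproxDen c x =
      (x + 1 / 2) ^ 4 + (3 * c - 1 / 10) * (x + 1 / 2) ^ 2 + (c / 4 - 3 / 80) := by
    unfold trigammaApproxDen; ring
  have h2 : 0 < 3 * c - 1 / 10 := by linarith
  have h0 : 0 < c / 4 - 3 / 80 := by linarith
  rw [hsq]
  positivity

lemma errorStepDen_pos (hc : 3 / 20 < c) {x : ℝ} (hx : -1 < x) : 0 < errorStepDen c x := by
  have hx' : 0 < x + 1 := by linarith
  have hden := trigammaApproxDen_pos hc
  exact mul_pos (pow_pos hx' 2) (mul_pos (hden x) (hden (x + 1)))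

lemma trigammaApprox_le_one_div (hc : 3 / 20 < c) {x : ℝ} (hx : 0 < x) :
    trigammaApprox c x ≤ 1 / x := by
  have : 0 < c := by linarith
  rw [trigammaApprox, div_le_div_iff₀ (trigammaApproxDen_pos hc x) hx, ← sub_nonneg]
  have hdiff : 1 * trigammaApproxDen c x - (x + 1 / 2) * (x ^ 2 + x + (1 / 15 + 3 * c)) * x =
      x ^ 3 / 2 + 5 / 6 * x ^ 2 + (11 / 30 + 3 / 2 * c) * x + c := by
    unfold trigammaApproxDen; ring
  rw [hdiff]
  positivity

lemma tendsto_trigammaApprox (hc : 3 / 20 < c) : Tendsto (trigammaApprox c) atTop (𝓝 0) := by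
  have : 0 < c := by linarith
  refine squeeze_zero' ?_ ?_ tendsto_inv_atTop_zero
  all_goals filter_upwards [eventually_gt_atTop 0] with x hx
  · have := trigammaApproxDen_pos hc x
    unfold trigammaApprox
    positivity
  · exact (trigammaApprox_le_one_div hc hx).trans_eq (one_div x)

lemma tendsto_trigammaError_add_nat (hc : 3 / 20 < c) {x : ℝ} (hx : -1 < x) :
    Tendsto (fun n : ℕ => trigammaError c (x + n)) atTop (𝓝 0) := by
  have happrox := (tendsto_trigammaApprox hc).comp (tendsto_const_add_natCast_atTop x)
  have htrigamma := tendsto_deriv_digamma_add_nat (by linarith : 0 < x + 1)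
  simpa [trigammaError, Function.comp_def, add_right_comm] using happrox.sub htrigamma

lemma trigammaError_sub_trigammaError_add_one (hc : 3 / 20 < c) {x : ℝ} (hx : -1 < x) :
    trigammaError c x - trigammaError c (x + 1) = errorStepNum c x / errorStepDen c x := by
  have hx' : 0 < x + 1 := by linarith
  have hden := (trigammaApproxDen_pos hc x).ne'
  have hden' := (trigammaApproxDen_pos hc (x + 1)).ne'
  calc trigammaError c x - trigammaError c (x + 1)
      = trigammaApprox c x - trigammaApprox c (x + 1) - 1 / (x + 1) ^ 2 := by
        rw [trigammaError, trigammaError, deriv_digamma_add_one hx']; ring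
    _ = errorStepNum c x / errorStepDen c x := by
        unfold trigammaApprox errorStepDen errorStepNum
        field_simp
        unfold trigammaApproxDen
        ring

lemma errorStepNum_neg (hc : 12 / 35 ≤ c) (x : ℝ) : errorStepNum c x < 0 := by
  have hlead : (4 / 25 - 7 / 15 * c) * (x + 1) ^ 2 ≤ 0 :=
    mul_nonpos_of_nonpos_of_nonneg (by linarith) (sq_nonneg _)
  have hc0 : 0 < c := by linarith
  unfold errorStepNum
  linarith [pow_pos hc0 2]

lemma errorStepNum_strictMonoOn (hc : c < 12 / 35) :
    StrictMonoOn (errorStepNum c) (Ici (-1)) := by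
  intro x hx y _ hxy
  have hx' : 0 ≤ x + 1 := by linarith [mem_Ici.1 hx]
  have hlead : 0 < 4 / 25 - 7 / 15 * c := by linarith
  unfold errorStepNum
  gcongr

lemma errorStepNum_one_pos (hc₀ : 0 < c) (hc : c ≤ 1 / 4) : 0 < errorStepNum c 1 := by
  unfold errorStepNum
  nlinarith

lemma trigammaApproxDen_mul_add_le (hc : 3 / 20 < c) {a x y : ℝ} (ha : 0 ≤ a) (hx : 0 ≤ x)
    (hy : 0 ≤ y) :
    trigammaApproxDen c a * trigammaApproxDen c (a + x + y) ≤
      trigammaApproxDen c (a + x) * trigammaApproxDen c (a + y) := by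
  obtain ⟨d, hd, rfl⟩ : ∃ d, 0 < d ∧ c = 3 / 20 + d := ⟨c - 3 / 20, by linarith, by ring⟩
  -- The difference is a polynomial in `a`, `x`, `y`, `d` with nonnegative coefficients.
  rw [← sub_nonneg]
  unfold trigammaApproxDen
  ring_nf
  positivity

lemma errorStepDen_zero_mul_add_le (hc : 3 / 20 < c) {x y : ℝ} (hx : 0 ≤ x) (hy : 0 ≤ y) :
    errorStepDen c 0 * errorStepDen c (x + y) ≤ errorStepDen c x * errorStepDen c y := by
  have hmul_nonneg (y z : ℝ) : 0 ≤ trigammaApproxDen c y * trigammaApproxDen c z :=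
    (mul_pos (trigammaApproxDen_pos hc y) (trigammaApproxDen_pos hc z)).le
  have hsq : (x + y + 1) ^ 2 ≤ ((x + 1) * (y + 1)) ^ 2 := by
    gcongr
    nlinarith [mul_nonneg hx hy]
  have h₀ := trigammaApproxDen_mul_add_le hc le_rfl hx hy
  have h₁ := trigammaApproxDen_mul_add_le hc zero_le_one hx hy
  simp only [zero_add] at h₀
  simp only [add_comm (1 : ℝ), add_right_comm x 1 y] at h₁
  calc errorStepDen c 0 * errorStepDen c (x + y)
      = (x + y + 1) ^ 2 * (trigammaApproxDen c 0 * trigammaApproxDen c (x + y) *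
          (trigammaApproxDen c 1 * trigammaApproxDen c (x + y + 1))) := by
        simp only [errorStepDen, zero_add]; ring
    _ ≤ ((x + 1) * (y + 1)) ^ 2 * (trigammaApproxDen c x * trigammaApproxDen c y *
          (trigammaApproxDen c (x + 1) * trigammaApproxDen c (y + 1))) := by
        gcongr
        exacts [mul_nonneg (hmul_nonneg _ _) (hmul_nonneg _ _), hmul_nonneg _ _, hmul_nonneg _ _]
    _ = errorStepDen c x * errorStepDen c y := by
        unfold errorStepDen; ring

lemma trigammaError_neg (hc : 12 / 35 ≤ c) {x : ℝ} (hx : -1 < x) : trigammaError c x < 0 := by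
  have hc' : 3 / 20 < c := by linarith
  have hmono : StrictMono fun n : ℕ => trigammaError c (x + n) := by
    refine strictMono_nat_of_lt_succ fun n => ?_
    have hxn : -1 < x + n := by linarith [n.cast_nonneg (α := ℝ)]
    rw [← sub_neg, Nat.cast_succ, ← add_assoc, trigammaError_sub_trigammaError_add_one hc' hxn]
    exact div_neg_of_neg_of_pos (errorStepNum_neg hc _) (errorStepDen_pos hc' hxn)
  simpa using lt_of_strictMono_of_tendsto hmono (tendsto_trigammaError_add_nat hc' hx) 0

lemma trigammaError_zero (hc : c ≠ 0) : trigammaError c 0 = 3 / 2 + 1 / (30 * c) - π ^ 2 / 6 := by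
  simp only [trigammaError, trigammaApprox, trigammaApproxDen, zero_add, deriv_digamma_one]
  field_simp
  ring

lemma trigammaError_zero_nonneg (hc₀ : 0 < c) (hc : c ≤ 1 / (5 * (π ^ 2 - 9))) :
    0 ≤ trigammaError c 0 := by
  have hπ : 0 < 5 * (π ^ 2 - 9) := by nlinarith [pi_gt_three]
  have hinv := (le_one_div hc₀ hπ).1 hc
  have hsplit : 1 / (30 * c) = 1 / c / 30 := by ring
  rw [trigammaError_zero hc₀.ne', hsplit]
  linarith

lemma errorStep_ratio_mul_lt (hc₀ : 3 / 20 < c) (hc : c ≤ 1 / 4) {x : ℝ} (hx : 0 < x) (n : ℕ) :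
    errorStepDen c 0 / errorStepDen c x * (errorStepNum c n / errorStepDen c n) <
      errorStepNum c (x + n) / errorStepDen c (x + n) := by
  have hden {y : ℝ} (hy : 0 ≤ y) : 0 < errorStepDen c y := errorStepDen_pos hc₀ (by linarith)
  have hden₀ := hden le_rfl
  have hdenx := hden hx.le
  have hdenn := hden n.cast_nonneg
  have hdenxn := hden (by positivity : 0 ≤ x + n)
  have hmono := errorStepNum_strictMonoOn (by linarith : c < 12 / 35)
  have hmem {y : ℝ} (hy : 0 ≤ y) : y ∈ Ici (-1 : ℝ) := by simp only [mem_Ici]; linarith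
  calc errorStepDen c 0 / errorStepDen c x * (errorStepNum c n / errorStepDen c n)
      ≤ errorStepNum c n / errorStepDen c (x + n) := by
        rcases n.eq_zero_or_pos with rfl | hn
        · rw [Nat.cast_zero, add_zero]
          exact le_of_eq (by field_simp)
        · have hnum : 0 ≤ errorStepNum c n :=
            (errorStepNum_one_pos (by linarith) hc).le.trans <|
              hmono.monotoneOn (hmem zero_le_one) (hmem n.cast_nonneg) (mod_cast hn)
          have hlog := errorStepDen_zero_mul_add_le hc₀ hx.le (n.cast_nonneg (α := ℝ))
          rw [div_mul_div_comm, div_le_div_iff₀ (by positivity) hdenxn]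
          linarith [mul_le_mul_of_nonneg_left hlog hnum]
    _ < errorStepNum c (x + n) / errorStepDen c (x + n) := by
        gcongr
        exact hmono (hmem n.cast_nonneg) (hmem (by positivity)) (by linarith)

lemma trigammaError_pos (hc₀ : 3 / 20 < c) (hc : c ≤ 1 / (5 * (π ^ 2 - 9))) {x : ℝ} (hx : 0 < x) :
    0 < trigammaError c x := by
  have hc4 : c ≤ 1 / 4 := hc.trans (one_div_le_one_div_of_le four_pos (by nlinarith [pi_gt_d2]))
  set ρ := errorStepDen c 0 / errorStepDen c x with hρ
  have hρ_pos : 0 < ρ :=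
    div_pos (errorStepDen_pos hc₀ (by norm_num)) (errorStepDen_pos hc₀ (by linarith))
  have hanti : StrictAnti fun n : ℕ => trigammaError c (x + n) - ρ * trigammaError c n := by
    refine strictAnti_nat_of_succ_lt fun n => ?_
    have hn : -1 < (n : ℝ) := by linarith [n.cast_nonneg (α := ℝ)]
    have hstep := trigammaError_sub_trigammaError_add_one hc₀ hn
    have hstepx := trigammaError_sub_trigammaError_add_one hc₀ (by linarith : -1 < x + n)
    have hlt := errorStep_ratio_mul_lt hc₀ hc4 hx n
    rw [← hstep, ← hstepx, ← hρ] at hlt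
    push_cast
    rw [← add_assoc]
    linarith
  have hlim :
      Tendsto (fun n : ℕ => trigammaError c (x + n) - ρ * trigammaError c n) atTop (𝓝 0) := by
    have h₀ := tendsto_trigammaError_add_nat hc₀ (by norm_num : (-1 : ℝ) < 0)
    have hx := tendsto_trigammaError_add_nat hc₀ (by linarith : -1 < x)
    simpa using hx.sub (h₀.const_mul ρ)
  have hpos := lt_of_strictAnti_of_tendsto hanti hlim 0
  have hzero := mul_nonneg hρ_pos.le (trigammaError_zero_nonneg (by linarith) hc)
  simp only [Nat.cast_zero, add_zero] at hpos
  linarith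

end Approximation

/-- For x > 0, the sharp double inequality for the trigamma function ψ'(x+1). -/
theorem stmt_10 (x : ℝ) (hx : 0 < x) :
    (x + 1 / 2) * (x ^ 2 + x + 23 / 21) /
        (x ^ 4 + 2 * x ^ 3 + (17 / 7) * x ^ 2 + (10 / 7) * x + 12 / 35) <
      deriv digamma (x + 1) ∧
    deriv digamma (x + 1) <
      (x + 1 / 2) * (x ^ 2 + x + π ^ 2 / (15 * (π ^ 2 - 9))) /
        (x ^ 4 + 2 * x ^ 3 + ((7 * π ^ 2 - 60) / (5 * (π ^ 2 - 9))) * x ^ 2 +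
          ((2 * π ^ 2 - 15) / (5 * (π ^ 2 - 9))) * x + 1 / (5 * (π ^ 2 - 9))) := by
  have hπ : 0 < π ^ 2 - 9 := by nlinarith [pi_gt_three]
  have hc : 3 / 20 < 1 / (5 * (π ^ 2 - 9)) := by
    rw [div_lt_div_iff₀ (by norm_num) (by positivity)]
    nlinarith [pi_gt_three, pi_lt_d2]
  have hlower := sub_neg.1 (trigammaError_neg le_rfl (by linarith : -1 < x))
  have hupper := sub_pos.1 (trigammaError_pos hc le_rfl hx)
  constructor
  · convert hlower using 1
    norm_num [trigammaApprox, trigammaApproxDen]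
  · convert hupper using 1
    rw [trigammaApprox, trigammaApproxDen]
    congr 2 <;> field_simp <;> ring
end

section
/- Define l_n(a) = H_n − L(n,a) for n ∈ ℕ, n ≥ 1, and a > 1/15. Let a₁ = (40 + 3√205)/105, and let a₀ ≈ 0.512967071402 be the unique root of −γ = L(0,a) on (1/15, ∞). Then for all n ≥ 1 one has l_n(a₁) < γ ≤ l_n(a₀); moreover, for every fixed n ≥ 1, the map a ↦ l_n(a) is strictly decreasing on (1/15, ∞). -/
open Real Filter Set

/-- The sequence lₙ(a) = Hₙ − L(n,a). -/
noncomputable def l (n : ℕ) (a : ℝ) : ℝ := (harmonic n : ℝ) - L n a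

/-!
For fixed `x`, `∂L/∂a` has the sign of `(u - v) (1/u + 1/v) - 2 (log u - log v)`, where `v < u` are
the two arguments of the logarithms; this is positive because `log w < sinh (log w)` for `w = u/v`.

For fixed `a`, put `κ = a - 1/(45a)`. The increment `1/m - (L m a - L (m - 1) a)` of `l` tends to
`0` as the real variable `m` tends to infinity, and its derivative has the sign of
`15 (16 - 21κ) m² - (15κ + 4)²`. For `κ = 16/21`, that is `a = a₁`, this is negative, so the
increments are positive and `l n a₁` increases to `γ`. For `a = 3/5` it is positive on `m ≥ 2`, so
the increments are negative there and `l n (3/5)` decreases to `γ` from `n = 1` on. Finally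
`L 0 (3/40) < -γ < L 0 (3/5)` puts `a₀` below `3/5`. The second inequality is delicate: it follows
from `l 1 a₁ < γ`, with `L 1 a₁` bounded by Jensen's inequality.
-/

section MonotoneLimits

variable {ι β : Type*} [SemilatticeSup ι] [NoMaxOrder ι] [TopologicalSpace β] [Preorder β]

lemma lt_of_strictMonoOn_Ici_of_tendsto [ClosedIciTopology β] {f : ι → β} {i₀ i : ι} {c : β}
    (hf : StrictMonoOn f (Ici i₀)) (hc : Tendsto f atTop (nhds c)) (hi : i₀ ≤ i) : f i < c := by
  obtain ⟨j, hij⟩ := exists_gt i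
  have hj : i₀ ≤ j := hi.trans hij.le
  have : Nonempty ι := ⟨i⟩
  refine (hf hi hj hij).trans_le (ge_of_tendsto hc ?_)
  filter_upwards [eventually_ge_atTop j] with k hk
  exact hf.monotoneOn hj (hj.trans hk) hk

lemma lt_of_strictAntiOn_Ici_of_tendsto [ClosedIicTopology β] {f : ι → β} {i₀ i : ι} {c : β}
    (hf : StrictAntiOn f (Ici i₀)) (hc : Tendsto f atTop (nhds c)) (hi : i₀ ≤ i) : c < f i :=
  lt_of_strictMonoOn_Ici_of_tendsto (β := βᵒᵈ) hf.dual_right hc hi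

end MonotoneLimits

lemma two_mul_log_sub_log_lt {u v : ℝ} (hv : 0 < v) (hvu : v < u) :
    2 * (Real.log u - Real.log v) < (u - v) * (1 / u + 1 / v) := by
  have hu : 0 < u := hv.trans hvu
  have hlog : 0 < Real.log (u / v) := Real.log_pos ((one_lt_div hv).2 hvu)
  have hsinh := Real.self_lt_sinh_iff.2 hlog
  rw [Real.sinh_log (div_pos hu hv), Real.log_div hu.ne' hv.ne'] at hsinh
  calc 2 * (Real.log u - Real.log v) < 2 * ((u / v - (u / v)⁻¹) / 2) := by gcongr
    _ = (u - v) * (1 / u + 1 / v) := by field_simp; ring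

lemma tendsto_log_sq_add_self_add_const_sub_two_mul_log (c : ℝ) :
    Tendsto (fun x : ℝ => Real.log (x ^ 2 + x + c) - 2 * Real.log x) atTop (nhds 0) := by
  have hfactor : Tendsto (fun x : ℝ => 1 + x⁻¹ + c * x⁻¹ ^ 2) atTop (nhds 1) := by
    simpa using (tendsto_inv_atTop_zero.const_add (1 : ℝ)).add
      ((tendsto_inv_atTop_zero.pow 2).const_mul c)
  have hlog := hfactor.log one_ne_zero
  rw [Real.log_one] at hlog
  refine hlog.congr' ?_
  filter_upwards [eventually_gt_atTop 0, hfactor.eventually_ne one_ne_zero] with x hx hne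
  have hsplit : x ^ 2 + x + c = x ^ 2 * (1 + x⁻¹ + c * x⁻¹ ^ 2) := by field_simp
  rw [hsplit, Real.log_mul (by positivity) hne, Real.log_pow]
  push_cast
  ring

/-- The argument `(x² + x + 1/3) + a` of the first logarithm in `L x a`. -/
noncomputable def argPlus (x a : ℝ) : ℝ := x ^ 2 + x + (3 * a + 1) / 3

/-- The argument `(x² + x + 1/3) - 1/(45a)` of the second logarithm in `L x a`. -/
noncomputable def argMinus (x a : ℝ) : ℝ := x ^ 2 + x + (15 * a - 1) / (45 * a)

/-- The difference of the two shifts `a` and `1/(45a)`. Their product being constant, `∂L/∂x`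
depends on `a` only through it. -/
noncomputable def kappa (a : ℝ) : ℝ := a - 1 / (45 * a)

/-- The increment `l n a - l (n - 1) a`, extended to a real variable `m` in place of `n`. -/
noncomputable def increment (a m : ℝ) : ℝ := 1 / m - (L m a - L (m - 1) a)

lemma L_eq (x a : ℝ) : L x a = 1 / (90 * a ^ 2 + 2) * Real.log (argPlus x a) +
    45 * a ^ 2 / (90 * a ^ 2 + 2) * Real.log (argMinus x a) := rfl

lemma weights_add_eq_half (a : ℝ) :
    1 / (90 * a ^ 2 + 2) + 45 * a ^ 2 / (90 * a ^ 2 + 2) = 1 / 2 := by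
  field_simp
  ring

lemma argPlus_sub_argMinus {a : ℝ} (ha : a ≠ 0) (x : ℝ) :
    argPlus x a - argMinus x a = (45 * a ^ 2 + 1) / (45 * a) := by
  simp only [argPlus, argMinus]
  field_simp
  ring

lemma argPlus_mul_argMinus {a : ℝ} (ha : a ≠ 0) (x : ℝ) :
    argPlus x a * argMinus x a =
      (x ^ 2 + x + 1 / 3) ^ 2 + kappa a * (x ^ 2 + x + 1 / 3) - 1 / 45 := by
  simp only [argPlus, argMinus, kappa]
  field_simp
  ring

lemma argMinus_lt_argPlus {a : ℝ} (ha : 0 < a) (x : ℝ) : argMinus x a < argPlus x a := by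
  rw [← sub_pos, argPlus_sub_argMinus ha.ne']
  positivity

lemma argMinus_pos {x a : ℝ} (hx : 0 ≤ x ^ 2 + x) (ha : 1 / 15 < a) : 0 < argMinus x a :=
  add_pos_of_nonneg_of_pos hx (div_pos (by linarith) (by linarith))

lemma argPlus_pos {x a : ℝ} (hx : 0 ≤ x ^ 2 + x) (ha : 1 / 15 < a) : 0 < argPlus x a :=
  (argMinus_pos hx ha).trans (argMinus_lt_argPlus (by linarith) x)

lemma hasDerivAt_L_right {x a : ℝ} (ha : a ≠ 0) (hu : argPlus x a ≠ 0) (hv : argMinus x a ≠ 0) :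
    HasDerivAt (L x)
      (45 * a / (2 * (45 * a ^ 2 + 1) ^ 2) *
        ((argPlus x a - argMinus x a) * (1 / argPlus x a + 1 / argMinus x a) -
          2 * (Real.log (argPlus x a) - Real.log (argMinus x a)))) a := by
  have hplus : HasDerivAt (argPlus x) 1 a :=
    (((((hasDerivAt_id a).const_mul 3).add_const 1).div_const 3).const_add
      (x ^ 2 + x)).congr_deriv (by norm_num)
  have hminus : HasDerivAt (argMinus x) (1 / (45 * a ^ 2)) a := by
    refine (((((hasDerivAt_id a).const_mul 15).sub_const 1).div
      ((hasDerivAt_id a).const_mul 45) (by simpa using ha)).const_add (x ^ 2 + x)).congr_deriv ?_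
    simp only [id_eq]
    field_simp
    ring
  have hsq : HasDerivAt (fun a : ℝ => a ^ 2) (2 * a) a := by simpa using hasDerivAt_pow 2 a
  have hden : HasDerivAt (fun a : ℝ => 90 * a ^ 2 + 2) (90 * (2 * a)) a :=
    (hsq.const_mul 90).add_const 2
  have hden0 : 90 * a ^ 2 + 2 ≠ 0 := by positivity
  refine ((((hasDerivAt_const a (1 : ℝ)).div hden hden0).mul (hplus.log hu)).add
    (((hsq.const_mul 45).div hden hden0).mul (hminus.log hv))).congr_deriv ?_
  rw [argPlus_sub_argMinus ha]
  simp only [Pi.div_apply]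
  generalize Real.log (argPlus x a) = logPlus
  generalize Real.log (argMinus x a) = logMinus
  field_simp
  ring

lemma exists_pos_hasDerivAt_L_right {x a : ℝ} (hx : 0 ≤ x ^ 2 + x) (ha : 1 / 15 < a) :
    ∃ d : ℝ, 0 < d ∧ HasDerivAt (L x) d a := by
  have ha0 : 0 < a := by linarith
  have hu := argPlus_pos hx ha
  have hv := argMinus_pos hx ha
  have hlog := two_mul_log_sub_log_lt hv (argMinus_lt_argPlus ha0 x)
  exact ⟨_, mul_pos (by positivity) (sub_pos.2 hlog), hasDerivAt_L_right ha0.ne' hu.ne' hv.ne'⟩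

lemma continuousOn_L_right {x : ℝ} (hx : 0 ≤ x ^ 2 + x) : ContinuousOn (L x) (Ioi (1 / 15)) :=
  fun a ha => by
    obtain ⟨_, -, hderiv⟩ := exists_pos_hasDerivAt_L_right hx ha
    exact hderiv.continuousAt.continuousWithinAt

lemma strictMonoOn_L_right {x : ℝ} (hx : 0 ≤ x ^ 2 + x) : StrictMonoOn (L x) (Ioi (1 / 15)) := by
  refine strictMonoOn_of_deriv_pos (convex_Ioi _) (continuousOn_L_right hx) fun a ha => ?_
  rw [interior_Ioi] at ha
  obtain ⟨_, hpos, hderiv⟩ := exists_pos_hasDerivAt_L_right hx ha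
  rwa [hderiv.deriv]

lemma hasDerivAt_L_left {x a : ℝ} (ha : a ≠ 0) (hu : argPlus x a ≠ 0) (hv : argMinus x a ≠ 0) :
    HasDerivAt (fun x => L x a)
      ((x + 1 / 2) * (x ^ 2 + x + 1 / 3 + kappa a) / (argPlus x a * argMinus x a)) x := by
  have hquad : HasDerivAt (fun x : ℝ => x ^ 2 + x) (2 * x + 1) x :=
    ((hasDerivAt_pow 2 x).add (hasDerivAt_id x)).congr_deriv (by simp)
  have hplus : HasDerivAt (fun x => argPlus x a) (2 * x + 1) x := hquad.add_const _
  have hminus : HasDerivAt (fun x => argMinus x a) (2 * x + 1) x := hquad.add_const _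
  refine (((hplus.log hu).const_mul _).add ((hminus.log hv).const_mul _)).congr_deriv ?_
  have hplus_eq : argPlus x a = x ^ 2 + x + 1 / 3 + a := by rw [argPlus]; ring
  have hminus_eq : argMinus x a = x ^ 2 + x + 1 / 3 - 1 / (45 * a) := by
    rw [argMinus]; field_simp; ring
  have hnum : 1 / (90 * a ^ 2 + 2) * argMinus x a + 45 * a ^ 2 / (90 * a ^ 2 + 2) * argPlus x a =
      (x ^ 2 + x + 1 / 3 + kappa a) / 2 := by
    rw [hplus_eq, hminus_eq, kappa]
    field_simp
    ring
  rw [eq_div_iff (mul_ne_zero hu hv)]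
  linear_combination (exp := 1) (2 * x + 1) * hnum +
    (2 * x + 1) / (90 * a ^ 2 + 2) * argMinus x a * div_self hu +
    (2 * x + 1) * (45 * a ^ 2) / (90 * a ^ 2 + 2) * argPlus x a * div_self hv

lemma L_le_half_log {x a : ℝ} (ha : 0 < a) (hv : 0 < argMinus x a) :
    L x a ≤ Real.log (x ^ 2 + x + 1 / 3) / 2 := by
  have hu : 0 < argPlus x a := hv.trans (argMinus_lt_argPlus ha x)
  have hweights : 2 * (1 / (90 * a ^ 2 + 2)) + 2 * (45 * a ^ 2 / (90 * a ^ 2 + 2)) = 1 := by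
    linarith [weights_add_eq_half a]
  have hjensen := strictConcaveOn_log_Ioi.concaveOn.2 hu hv
    (by positivity) (by positivity) hweights
  have hmean : 2 * (1 / (90 * a ^ 2 + 2)) * argPlus x a +
      2 * (45 * a ^ 2 / (90 * a ^ 2 + 2)) * argMinus x a = x ^ 2 + x + 1 / 3 := by
    simp only [argPlus, argMinus]
    field_simp
    ring
  simp only [smul_eq_mul, hmean] at hjensen
  rw [L_eq]
  linarith

lemma tendsto_L_sub_log (a : ℝ) :
    Tendsto (fun x : ℝ => L x a - Real.log x) atTop (nhds 0) := by
  have hsum := ((tendsto_log_sq_add_self_add_const_sub_two_mul_log ((3 * a + 1) / 3)).const_mul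
    (1 / (90 * a ^ 2 + 2))).add
    ((tendsto_log_sq_add_self_add_const_sub_two_mul_log ((15 * a - 1) / (45 * a))).const_mul
      (45 * a ^ 2 / (90 * a ^ 2 + 2)))
  simp only [mul_zero, add_zero] at hsum
  refine hsum.congr fun x => ?_
  rw [L]
  linear_combination (-2 * Real.log x) * weights_add_eq_half a

lemma tendsto_l (a : ℝ) :
    Tendsto (fun n : ℕ => l n a) atTop (nhds Real.eulerMascheroniConstant) := by
  simpa [Function.comp_def, l] using
    Real.tendsto_harmonic_sub_log.sub ((tendsto_L_sub_log a).comp tendsto_natCast_atTop_atTop)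

lemma tendsto_increment (a : ℝ) : Tendsto (increment a) atTop (nhds 0) := by
  have hshift : Tendsto (fun x : ℝ => x - 1) atTop atTop :=
    tendsto_atTop_add_const_right _ (-1) tendsto_id
  have hL := (tendsto_L_sub_log a).sub ((tendsto_L_sub_log a).comp hshift)
  have hlog := tendsto_log_comp_add_sub_log (-1)
  have hsum := ((tendsto_inv_atTop_zero (𝕜 := ℝ)).sub hL).add hlog
  simp only [sub_zero, add_zero] at hsum
  refine hsum.congr fun x => ?_
  simp only [increment, Function.comp_apply, ← sub_eq_add_neg]
  ring

lemma l_succ_sub_l (n : ℕ) (a : ℝ) : l (n + 1) a - l n a = increment a (n + 1) := by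
  simp only [l, increment, harmonic_succ]
  push_cast
  rw [add_sub_cancel_right, one_div]
  ring

lemma hasDerivAt_increment {a m : ℝ} (ha : a ≠ 0) (hm : m ≠ 0)
    (hu : argPlus m a ≠ 0) (hv : argMinus m a ≠ 0)
    (hu' : argPlus (m - 1) a ≠ 0) (hv' : argMinus (m - 1) a ≠ 0) :
    HasDerivAt (increment a)
      ((15 * (16 - 21 * kappa a) * m ^ 2 - (15 * kappa a + 4) ^ 2) /
        (2025 * m ^ 2 * (argPlus m a * argMinus m a) *
          (argPlus (m - 1) a * argMinus (m - 1) a))) m := by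
  have hinv : HasDerivAt (fun m : ℝ => 1 / m) (-(m ^ 2)⁻¹) m := by
    simpa using hasDerivAt_inv hm
  have hpred : HasDerivAt (fun m => L (m - 1) a) _ m :=
    (hasDerivAt_L_left ha hu' hv').comp_sub_const m 1
  refine (hinv.sub ((hasDerivAt_L_left ha hu hv).sub hpred)).congr_deriv ?_
  have hq := mul_ne_zero hu hv
  have hq' := mul_ne_zero hu' hv'
  have hq_eq := argPlus_mul_argMinus ha m
  have hq'_eq := argPlus_mul_argMinus ha (m - 1)
  generalize argPlus m a * argMinus m a = q at *
  generalize argPlus (m - 1) a * argMinus (m - 1) a = q' at *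
  field_simp
  rw [hq_eq, hq'_eq]
  ring

lemma exists_pos_hasDerivAt_increment {a m : ℝ} (ha : 1 / 15 < a) (hm : 1 ≤ m) :
    ∃ D : ℝ, 0 < D ∧ HasDerivAt (increment a)
      ((15 * (16 - 21 * kappa a) * m ^ 2 - (15 * kappa a + 4) ^ 2) / D) m := by
  have hx : 0 ≤ m ^ 2 + m := by positivity
  have hx' : 0 ≤ (m - 1) ^ 2 + (m - 1) := by nlinarith
  have hu := argPlus_pos hx ha
  have hv := argMinus_pos hx ha
  have hu' := argPlus_pos hx' ha
  have hv' := argMinus_pos hx' ha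
  exact ⟨_, by positivity, hasDerivAt_increment (by linarith) (by linarith) hu.ne' hv.ne' hu'.ne'
    hv'.ne'⟩

lemma continuousOn_increment {a m₀ : ℝ} (ha : 1 / 15 < a) (hm₀ : 1 ≤ m₀) :
    ContinuousOn (increment a) (Ici m₀) := fun m hm => by
  obtain ⟨_, -, hderiv⟩ := exists_pos_hasDerivAt_increment ha (hm₀.trans hm)
  exact hderiv.continuousAt.continuousWithinAt

lemma fifteen_mul_kappa_add_four_pos {a : ℝ} (ha : 1 / 15 < a) : 0 < 15 * kappa a + 4 := by
  have ha0 : 0 < a := by linarith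
  have hfactor : 15 * kappa a + 4 = (15 * a - 1) * (3 * a + 1) / (3 * a) := by
    rw [kappa]
    field_simp
    ring
  rw [hfactor]
  exact div_pos (mul_pos (by linarith) (by linarith)) (by linarith)

lemma strictAntiOn_increment {a : ℝ} (ha : 1 / 15 < a) (hκ : 16 / 21 ≤ kappa a) :
    StrictAntiOn (increment a) (Ici 1) := by
  refine strictAntiOn_of_deriv_neg (convex_Ici _) (continuousOn_increment ha le_rfl) fun m hm => ?_
  rw [interior_Ici] at hm
  obtain ⟨D, hD, hderiv⟩ := exists_pos_hasDerivAt_increment ha (le_of_lt hm)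
  rw [hderiv.deriv]
  have hlead : 15 * (16 - 21 * kappa a) * m ^ 2 ≤ 0 :=
    mul_nonpos_of_nonpos_of_nonneg (by linarith) (sq_nonneg m)
  have hconst := pow_pos (fifteen_mul_kappa_add_four_pos ha) 2
  exact div_neg_of_neg_of_pos (by linarith) hD

lemma strictMonoOn_increment {a m₀ : ℝ} (ha : 1 / 15 < a) (hm₀ : 1 ≤ m₀)
    (hκ : (15 * kappa a + 4) ^ 2 ≤ 15 * (16 - 21 * kappa a) * m₀ ^ 2) :
    StrictMonoOn (increment a) (Ici m₀) := by
  refine strictMonoOn_of_deriv_pos (convex_Ici _) (continuousOn_increment ha hm₀) fun m hm => ?_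
  rw [interior_Ici] at hm
  obtain ⟨D, hD, hderiv⟩ := exists_pos_hasDerivAt_increment ha (hm₀.trans (le_of_lt hm))
  rw [hderiv.deriv]
  have hlead : 0 < 15 * (16 - 21 * kappa a) :=
    pos_of_mul_pos_left ((pow_pos (fifteen_mul_kappa_add_four_pos ha) 2).trans_le hκ)
      (sq_nonneg m₀)
  have hsq : m₀ ^ 2 < m ^ 2 := pow_lt_pow_left₀ hm (by linarith) two_ne_zero
  exact div_pos (sub_pos.2 (hκ.trans_lt (mul_lt_mul_of_pos_left hsq hlead))) hD

lemma strictMono_l_left {a : ℝ} (ha : 1 / 15 < a) (hκ : 16 / 21 ≤ kappa a) :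
    StrictMono fun n : ℕ => l n a := by
  refine strictMono_nat_of_lt_succ fun n => sub_pos.1 ?_
  rw [l_succ_sub_l]
  exact lt_of_strictAntiOn_Ici_of_tendsto (strictAntiOn_increment ha hκ) (tendsto_increment a)
    (by simp)

lemma strictAntiOn_l_left {a : ℝ} {N : ℕ} (ha : 1 / 15 < a)
    (hκ : (15 * kappa a + 4) ^ 2 ≤ 15 * (16 - 21 * kappa a) * (N + 1) ^ 2) :
    StrictAntiOn (fun n : ℕ => l n a) (Ici N) := by
  refine strictAntiOn_of_add_one_lt ordConnected_Ici fun n _ hn _ => sub_neg.1 ?_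
  rw [l_succ_sub_l]
  exact lt_of_strictMonoOn_Ici_of_tendsto (strictMonoOn_increment ha (by simp) hκ)
    (tendsto_increment a) (by simpa using hn)

lemma l_lt_eulerMascheroniConstant {a : ℝ} (ha : 1 / 15 < a) (hκ : 16 / 21 ≤ kappa a) (n : ℕ) :
    l n a < Real.eulerMascheroniConstant :=
  lt_of_strictMonoOn_Ici_of_tendsto (f := fun n => l n a)
    ((strictMono_l_left ha hκ).strictMonoOn _) (tendsto_l a) n.zero_le

lemma eulerMascheroniConstant_lt_l {a : ℝ} {N n : ℕ} (ha : 1 / 15 < a)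
    (hκ : (15 * kappa a + 4) ^ 2 ≤ 15 * (16 - 21 * kappa a) * (N + 1) ^ 2) (hn : N ≤ n) :
    Real.eulerMascheroniConstant < l n a :=
  lt_of_strictAntiOn_Ici_of_tendsto (f := fun n => l n a)
    (strictAntiOn_l_left ha hκ) (tendsto_l a) hn

lemma strictAntiOn_l_right (n : ℕ) : StrictAntiOn (fun a => l n a) (Ioi (1 / 15)) :=
  fun _ ha _ hb hab => sub_lt_sub_left (strictMonoOn_L_right (by positivity) ha hb hab) _

/-- The constant `a₁`: the positive parameter whose `kappa` is `16 / 21`, where the leading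
coefficient in the numerator of the derivative of `increment` vanishes. -/
noncomputable def criticalParam : ℝ := (40 + 3 * Real.sqrt 205) / 105

lemma kappa_criticalParam : kappa criticalParam = 16 / 21 := by
  have hsq := Real.sq_sqrt (show (0 : ℝ) ≤ 205 by norm_num)
  rw [kappa, criticalParam]
  field_simp
  linear_combination 8505 * hsq

lemma one_div_fifteen_lt_criticalParam : 1 / 15 < criticalParam := by
  rw [criticalParam]
  linarith [Real.sqrt_nonneg 205]

lemma harmonic_sub_half_log_lt_eulerMascheroniConstant (n : ℕ) :
    harmonic n - Real.log (n ^ 2 + n + 1 / 3) / 2 < Real.eulerMascheroniConstant := by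
  have hL : L n criticalParam ≤ Real.log ((n : ℝ) ^ 2 + n + 1 / 3) / 2 :=
    L_le_half_log (by linarith [one_div_fifteen_lt_criticalParam])
      (argMinus_pos (by positivity) one_div_fifteen_lt_criticalParam)
  have hl := l_lt_eulerMascheroniConstant one_div_fifteen_lt_criticalParam
    kappa_criticalParam.ge n
  rw [l] at hl
  linarith

lemma log_seven_lt : Real.log 7 < 1.9486 := by
  have hpow : Real.log (5 * 7 ^ 3) < Real.log (2 ^ 6 * 3 ^ 3) :=
    Real.log_lt_log (by norm_num) (by norm_num)
  rw [Real.log_mul (by norm_num) (by norm_num), Real.log_mul (by norm_num) (by norm_num)] at hpow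
  simp only [Real.log_pow] at hpow
  push_cast at hpow
  linarith [Real.log_two_lt_d9, Real.log_three_lt_d9, Real.log_five_gt_d9]

lemma neg_eulerMascheroniConstant_lt_L_zero : -Real.eulerMascheroniConstant < L 0 (3 / 5) := by
  have hγ : 1 - Real.log (7 / 3) / 2 < Real.eulerMascheroniConstant := by
    convert harmonic_sub_half_log_lt_eulerMascheroniConstant 1 using 1
    norm_num
  have hL : L 0 (3 / 5) = 5 / 172 * Real.log (2 * 7 / (3 * 5)) +
      81 / 172 * Real.log (2 ^ 3 / 3 ^ 3) := by
    norm_num [L]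
  rw [hL, Real.log_div (by norm_num) (by norm_num), Real.log_div (by norm_num) (by norm_num),
    Real.log_mul (by norm_num) (by norm_num), Real.log_mul (by norm_num) (by norm_num),
    Real.log_pow, Real.log_pow]
  rw [Real.log_div (by norm_num) (by norm_num)] at hγ
  push_cast
  linarith [log_seven_lt, Real.log_two_gt_d9, Real.log_three_lt_d9, Real.log_five_lt_d9]

lemma L_zero_lt_neg_eulerMascheroniConstant : L 0 (3 / 40) < -Real.eulerMascheroniConstant := by
  have hL : L 0 (3 / 40) = 160 / 401 * Real.log (49 / 120) - 243 / 802 * Real.log 3 := by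
    have hcube : Real.log (1 / 27) = -3 * Real.log 3 := by
      rw [show (1 / 27 : ℝ) = (3 ^ 3)⁻¹ by norm_num, Real.log_inv, Real.log_pow]
      push_cast
      ring
    norm_num [L] at hcube ⊢
    linarith
  have hlog : Real.log (49 / 120) < Real.log 5 - (2 * Real.log 2 + Real.log 3) :=
    calc Real.log (49 / 120) < Real.log (5 / (2 ^ 2 * 3)) :=
          Real.log_lt_log (by norm_num) (by norm_num)
      _ = Real.log 5 - (2 * Real.log 2 + Real.log 3) := by
          rw [Real.log_div (by norm_num) (by norm_num), Real.log_mul (by norm_num) (by norm_num),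
            Real.log_pow]
          push_cast
          rfl
  linarith [Real.eulerMascheroniConstant_lt_two_thirds, Real.log_two_gt_d9, Real.log_three_gt_d9,
    Real.log_five_lt_d9]

lemma exists_L_zero_eq_neg_eulerMascheroniConstant :
    ∃ a ∈ Icc (3 / 40 : ℝ) (3 / 5), L 0 a = -Real.eulerMascheroniConstant := by
  have hsub : Icc (3 / 40 : ℝ) (3 / 5) ⊆ Ioi (1 / 15) :=
    fun a ha => lt_of_lt_of_le (by norm_num) ha.1
  exact intermediate_value_Icc (by norm_num) ((continuousOn_L_right (by norm_num)).mono hsub)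
    ⟨L_zero_lt_neg_eulerMascheroniConstant.le, neg_eulerMascheroniConstant_lt_L_zero.le⟩

/-- With a₁ = (40+3√205)/105 and a₀ the unique root of −γ = L(0,a) on (1/15,∞):
for all n ≥ 1, lₙ(a₁) < γ ≤ lₙ(a₀); and for each n ≥ 1, a ↦ lₙ(a) is strictly
decreasing on (1/15, ∞). -/
theorem stmt_19 :
    ∃ a₀ : ℝ, a₀ ∈ Set.Ioi (1 / 15 : ℝ) ∧
      (∀ a ∈ Set.Ioi (1 / 15 : ℝ), (-Real.eulerMascheroniConstant = L 0 a ↔ a = a₀)) ∧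
      (∀ n : ℕ, 1 ≤ n →
        l n ((40 + 3 * Real.sqrt 205) / 105) < Real.eulerMascheroniConstant ∧
          Real.eulerMascheroniConstant ≤ l n a₀) ∧
      (∀ n : ℕ, 1 ≤ n → StrictAntiOn (fun a : ℝ => l n a) (Set.Ioi (1 / 15))) := by
  obtain ⟨a₀, ⟨ha₀_ge, ha₀_le⟩, hroot⟩ := exists_L_zero_eq_neg_eulerMascheroniConstant
  have ha₀ : a₀ ∈ Ioi (1 / 15) := lt_of_lt_of_le (by norm_num) ha₀_ge
  refine ⟨a₀, ha₀, fun a ha => ⟨fun h => ?_, fun h => h ▸ hroot.symm⟩, fun n hn => ⟨?_, ?_⟩,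
    fun n _ => strictAntiOn_l_right n⟩
  · exact (strictMonoOn_L_right (by norm_num)).injOn ha ha₀ (h.symm.trans hroot.symm)
  · exact l_lt_eulerMascheroniConstant one_div_fifteen_lt_criticalParam kappa_criticalParam.ge n
  · calc Real.eulerMascheroniConstant
      _ ≤ l n (3 / 5) := (eulerMascheroniConstant_lt_l (N := 1) (by norm_num)
          (by norm_num [kappa]) hn).le
      _ ≤ l n a₀ := (strictAntiOn_l_right n).antitoneOn ha₀ (by norm_num) ha₀_le
end
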